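/- Let κ = 1/2 and let W = (φ₀, φ₀/√κ) with φ₀(x) = √κ(1+|x|²/24)⁻² be the explicit ground state. Assume the sharp Gagliardo–Nirenberg inequality R(u,v) ≤ (2/(3·H(W)^{1/2}))·H(u,v)^{3/2} holds for all pairs of Schwartz functions u, v : ℝ⁶ → ℂ. Then there is no classical solution (u, v) of the quadratic NLS system with κ = 1/2 defined on all of [0, ∞) whose initial data (u₀, v₀) = (u(0,·), v(0,·)) satisfies E(u₀, v₀) < E(W) and H(u₀, v₀) > H(W); i.e., every such classical solution blows up in finite time. -/

import Mathlib

open MeasureTheory Real Filter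

noncomputable section

/-- Six-dimensional Euclidean space. -/
abbrev E6 := EuclideanSpace ℝ (Fin 6)

/-- Partial derivative of a complex-valued function in the `j`-th coordinate direction. -/
def pd (f : E6 → ℂ) (j : Fin 6) (x : E6) : ℂ := fderiv ℝ f x (EuclideanSpace.single j 1)

/-- Laplacian of a complex-valued function on `ℝ⁶`. -/
def lap (f : E6 → ℂ) (x : E6) : ℂ :=
  ∑ j : Fin 6, fderiv ℝ (fun y => pd f j y) x (EuclideanSpace.single j 1)

/-- Partial derivative of a real-valued function in the `j`-th coordinate direction. -/
def pdR (f : E6 → ℝ) (j : Fin 6) (x : E6) : ℝ := fderiv ℝ f x (EuclideanSpace.single j 1)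

/-- Laplacian of a real-valued function on `ℝ⁶`. -/
def lapR (f : E6 → ℝ) (x : E6) : ℝ :=
  ∑ j : Fin 6, fderiv ℝ (fun y => pdR f j y) x (EuclideanSpace.single j 1)

/-- `|∇f(x)|²`, the squared length of the gradient. -/
def gradNormSq (f : E6 → ℂ) (x : E6) : ℝ := ∑ j : Fin 6, ‖pd f j x‖ ^ 2

/-- Kinetic energy `H(u,v) = ∫|∇u|² + (κ/2)∫|∇v|²`. -/
def Hen (κ : ℝ) (u v : E6 → ℂ) : ℝ :=
  (∫ x : E6, gradNormSq u x) + (κ / 2) * ∫ x : E6, gradNormSq v x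

/-- Potential energy `R(u,v) = Re ∫ conj(v) u²`. -/
def Ren (u v : E6 → ℂ) : ℝ := (∫ x : E6, (starRingEnd ℂ) (v x) * (u x) ^ 2).re

/-- Energy `E(u,v) = H(u,v) − R(u,v)`. -/
def Een (κ : ℝ) (u v : E6 → ℂ) : ℝ := Hen κ u v - Ren u v

/-- Mass `M(u,v) = ∫|u|² + ∫|v|²`. -/
def Mass (u v : E6 → ℂ) : ℝ := (∫ x : E6, ‖u x‖ ^ 2) + ∫ x : E6, ‖v x‖ ^ 2

/-- `j`-th component of the momentum `P(u,v) = Im ∫ (conj(u)∇u + (1/2)conj(v)∇v)`. -/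
def Pmom (u v : E6 → ℂ) (j : Fin 6) : ℝ :=
  (∫ x : E6, (starRingEnd ℂ) (u x) * pd u j x
    + (1 / 2 : ℂ) * (starRingEnd ℂ) (v x) * pd v j x).im

/-- The explicit profile `φ₀(x) = √κ (1 + |x|²/24)⁻²`. -/
def phi0 (κ : ℝ) (x : E6) : ℝ := Real.sqrt κ * ((1 + ‖x‖ ^ 2 / 24) ^ 2)⁻¹

/-- First component of the ground state `W`. -/
def W1 (κ : ℝ) (x : E6) : ℂ := (phi0 κ x : ℂ)

/-- Second component of the ground state `W`, namely `φ₀/√κ`. -/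
def W2 (κ : ℝ) (x : E6) : ℂ := ((phi0 κ x / Real.sqrt κ : ℝ) : ℂ)

/-- A function is Schwartz: smooth with all seminorms `sup ‖x‖^k ‖D^n f‖` finite. -/
def IsSchwartz (f : E6 → ℂ) : Prop :=
  ContDiff ℝ (⊤ : ℕ∞) f ∧ ∀ k n : ℕ, ∃ C : ℝ, ∀ x : E6, ‖x‖ ^ k * ‖iteratedFDeriv ℝ n f x‖ ≤ C

/-- A classical solution of the quadratic NLS system
`i∂ₜu + Δu + v conj(u) = 0`, `i∂ₜv + κΔv + u² = 0` on a time set `I`,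
with Schwartz slices whose seminorms are bounded locally uniformly in `t`. -/
structure IsClassicalSol (κ : ℝ) (I : Set ℝ) (u v : ℝ → E6 → ℂ) : Prop where
  smooth : ContDiffOn ℝ (⊤ : ℕ∞) (fun p : ℝ × E6 => (u p.1 p.2, v p.1 p.2)) (I ×ˢ Set.univ)
  eqn_u : ∀ t ∈ I, ∀ x : E6,
    Complex.I * deriv (fun s => u s x) t + lap (u t) x
      + v t x * (starRingEnd ℂ) (u t x) = 0
  eqn_v : ∀ t ∈ I, ∀ x : E6,
    Complex.I * deriv (fun s => v s x) t + (κ : ℂ) * lap (v t) x + (u t x) ^ 2 = 0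
  schwartz_u : ∀ t ∈ I, IsSchwartz (u t)
  schwartz_v : ∀ t ∈ I, IsSchwartz (v t)
  bounds : ∀ K : Set ℝ, K ⊆ I → IsCompact K → ∀ k n : ℕ, ∃ C : ℝ, ∀ t ∈ K, ∀ x : E6,
    ‖x‖ ^ k * ‖iteratedFDeriv ℝ n (u t) x‖ ≤ C ∧ ‖x‖ ^ k * ‖iteratedFDeriv ℝ n (v t) x‖ ≤ C

/-!
For a global solution the variance `V(t) = ∫ |x|² (|u|² + |v|²)` satisfies `V' = 4 P`, where `P` is
the dilation momentum weighted by `1` and `κ`. When `κ = 1/2` the nonlinear terms of `P'` form a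
total `x · ∇` derivative, so that `V'' = 4 (2 H - 3 R) = 12 E - 4 H` in dimension six. Energy is
conserved, and the sharp Gagliardo–Nirenberg inequality says `E ≥ H(W) / 3 = E(W)` wherever
`H = H(W)`; hence `H` cannot cross the level `H(W)`, and stays above it. Then
`V'' ≤ -12 (E(W) - E) < 0`, which drives the nonnegative `V` below zero in finite time.
-/

open SchwartzMap LineDeriv Laplacian Function
open scoped InnerProductSpace ContDiff SchwartzMap LineDeriv Laplacian

section Multipliers

variable {E F : Type*} [NormedAddCommGroup E] [InnerProductSpace ℝ E]
  [NormedAddCommGroup F] [NormedSpace ℝ F]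

/-- Multiplication of a Schwartz function by the linear coordinate `x ↦ ⟪v, x⟫`. -/
def coordMul (v : E) : 𝓢(E, F) →L[ℝ] 𝓢(E, F) := smulLeftCLM F fun x : E => ⟪v, x⟫_ℝ

/-- Multiplication of a Schwartz function by `|x|²`. -/
def normSqMul : 𝓢(E, F) →L[ℝ] 𝓢(E, F) := smulLeftCLM F fun x : E => ‖x‖ ^ 2

lemma coordMul_apply (v : E) (f : 𝓢(E, F)) (x : E) : coordMul v f x = ⟪v, x⟫_ℝ • f x :=
  smulLeftCLM_apply_apply (hasTemperateGrowth_inner_right v) f x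

lemma normSqMul_apply (f : 𝓢(E, F)) (x : E) : normSqMul f x = ‖x‖ ^ 2 • f x :=
  smulLeftCLM_apply_apply (hasTemperateGrowth_norm_sq E) f x

lemma lineDerivOp_coordMul (v w : E) (f : 𝓢(E, F)) :
    ∂_{w} (coordMul v f) = ⟪v, w⟫_ℝ • f + coordMul v (∂_{w} f) := by
  ext x
  have h : HasFDerivAt (fun y => ⟪v, y⟫_ℝ • f y) _ x :=
    (innerSL ℝ v).hasFDerivAt.smul (f.hasFDerivAt x)
  rw [lineDerivOp_apply_eq_fderiv, funext (coordMul_apply v f), h.fderiv]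
  simp [coordMul_apply, lineDerivOp_apply_eq_fderiv, add_comm]

lemma lineDerivOp_normSqMul (w : E) (f : 𝓢(E, F)) :
    ∂_{w} (normSqMul f) = (2 : ℝ) • coordMul w f + normSqMul (∂_{w} f) := by
  ext x
  have h : HasFDerivAt (fun y => ‖y‖ ^ 2 • f y) _ x :=
    (hasStrictFDerivAt_norm_sq x).hasFDerivAt.smul (f.hasFDerivAt x)
  rw [lineDerivOp_apply_eq_fderiv, funext (normSqMul_apply f), h.fderiv]
  simp [coordMul_apply, normSqMul_apply, lineDerivOp_apply_eq_fderiv, add_comm,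
    real_inner_comm, smul_smul]

lemma lineDerivOp_comm (v w : E) (f : 𝓢(E, F)) : ∂_{v} (∂_{w} f) = ∂_{w} (∂_{v} f) := by
  ext x
  have h : Differentiable ℝ (fderiv ℝ f) := (fderivCLM ℝ E F f).differentiable
  have hsymm : IsSymmSndFDerivAt ℝ f x := (f.contDiffAt ⊤).isSymmSndFDerivAt
    (by simpa using ENat.LEInfty.out)
  simp only [lineDerivOp_apply_eq_fderiv]
  change fderiv ℝ (fun y => fderiv ℝ f y w) x v = fderiv ℝ (fun y => fderiv ℝ f y v) x w
  simpa [fderiv_clm_apply (h x) (differentiableAt_const _)] using hsymm.eq v w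

lemma lineDerivOp_pairing {G W : Type*} [NormedAddCommGroup G] [NormedSpace ℝ G]
    [NormedAddCommGroup W] [NormedSpace ℝ W] (B : F →L[ℝ] G →L[ℝ] W) (v : E)
    (f : 𝓢(E, F)) (g : 𝓢(E, G)) :
    ∂_{v} (pairing B f g) = pairing B (∂_{v} f) g + pairing B f (∂_{v} g) := by
  ext x
  have h := B.hasFDerivAt_of_bilinear (f.hasFDerivAt x) (g.hasFDerivAt x)
  rw [lineDerivOp_apply_eq_fderiv]
  change fderiv ℝ (fun y => B (f y) (g y)) x v = _
  rw [h.fderiv]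
  simp [lineDerivOp_apply_eq_fderiv, add_comm]

end Multipliers

section Euler

variable {ι E F : Type*} [Fintype ι] [NormedAddCommGroup E] [InnerProductSpace ℝ E]
  [NormedAddCommGroup F] [NormedSpace ℝ F] (b : OrthonormalBasis ι ℝ E)

/-- The Euler operator `x · ∇`, the generator of dilations. -/
def eulerOp : 𝓢(E, F) →ₗ[ℝ] 𝓢(E, F) :=
  ∑ i, (coordMul (b i)).toLinearMap ∘ₗ (lineDerivOpCLM ℝ 𝓢(E, F) (b i)).toLinearMap

lemma eulerOp_eq (f : 𝓢(E, F)) : eulerOp b f = ∑ i, coordMul (b i) (∂_{b i} f) := by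
  simp [eulerOp]

lemma lineDerivOp_eulerOp (j : ι) (f : 𝓢(E, F)) :
    ∂_{b j} (eulerOp b f) = ∂_{b j} f + eulerOp b (∂_{b j} f) := by
  classical
  simp [eulerOp_eq, lineDerivOp_sum, lineDerivOp_coordMul, Finset.sum_add_distrib,
    b.inner_eq_ite, lineDerivOp_comm (b j)]

lemma eulerOp_pairing {G W : Type*} [NormedAddCommGroup G] [NormedSpace ℝ G]
    [NormedAddCommGroup W] [NormedSpace ℝ W] (B : F →L[ℝ] G →L[ℝ] W)
    (f : 𝓢(E, F)) (g : 𝓢(E, G)) :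
    eulerOp b (pairing B f g) = pairing B (eulerOp b f) g + pairing B f (eulerOp b g) := by
  ext x
  simp [eulerOp_eq, lineDerivOp_pairing, coordMul_apply, Finset.sum_add_distrib]

end Euler

section L2Pairing

variable {E V : Type*} [NormedAddCommGroup E] [InnerProductSpace ℝ E] [FiniteDimensional ℝ E]
  [MeasurableSpace E] [BorelSpace E] [NormedAddCommGroup V] [InnerProductSpace ℝ V]

lemma integrable_inner (f g : 𝓢(E, V)) : Integrable fun x => ⟪f x, g x⟫_ℝ :=
  (pairing (innerSL ℝ) f g).integrable

/-- The real `L²` scalar product of two Schwartz functions. -/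
def l2Form : LinearMap.BilinForm ℝ 𝓢(E, V) :=
  LinearMap.mk₂ ℝ (fun f g => ∫ x, ⟪f x, g x⟫_ℝ)
    (fun f f' g => by
      simpa [inner_add_left] using integral_add (integrable_inner f g) (integrable_inner f' g))
    (fun c f g => by simp [real_inner_smul_left, integral_const_mul])
    (fun f g g' => by
      simpa [inner_add_right] using integral_add (integrable_inner f g) (integrable_inner f g'))
    (fun c f g => by simp [real_inner_smul_right, integral_const_mul])

local notation "⟪" f "," g "⟫₂" => l2Form f g

lemma l2Form_apply (f g : 𝓢(E, V)) : ⟪f, g⟫₂ = ∫ x, ⟪f x, g x⟫_ℝ := rfl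

lemma l2Form_comm (f g : 𝓢(E, V)) : ⟪f, g⟫₂ = ⟪g, f⟫₂ := by
  simp only [l2Form_apply, real_inner_comm]

lemma l2Form_lineDerivOp_left (v : E) (f g : 𝓢(E, V)) : ⟪∂_{v} f, g⟫₂ = -⟪f, ∂_{v} g⟫₂ := by
  have h := integral_bilinear_lineDerivOp_right_eq_neg_left (μ := volume) f g (innerSL ℝ) v
  exact (neg_eq_iff_eq_neg.mpr h).symm

lemma l2Form_coordMul_left (v : E) (f g : 𝓢(E, V)) : ⟪coordMul v f, g⟫₂ = ⟪f, coordMul v g⟫₂ := by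
  simp only [l2Form_apply, coordMul_apply, real_inner_smul_left, real_inner_smul_right]

lemma l2Form_normSqMul_left (f g : 𝓢(E, V)) : ⟪normSqMul f, g⟫₂ = ⟪f, normSqMul g⟫₂ := by
  simp only [l2Form_apply, normSqMul_apply, real_inner_smul_left, real_inner_smul_right]

lemma l2Form_normSqMul_self_nonneg (f : 𝓢(E, V)) : 0 ≤ ⟪normSqMul f, f⟫₂ :=
  integral_nonneg fun x => by
    rw [normSqMul_apply, real_inner_smul_left]
    exact mul_nonneg (sq_nonneg _) real_inner_self_nonneg

variable {ι : Type*} [Fintype ι] (b : OrthonormalBasis ι ℝ E)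

/-- The Dirichlet form `∫ |∇f|²`. -/
def dirichlet (f : 𝓢(E, V)) : ℝ := ∑ i, ⟪∂_{b i} f, ∂_{b i} f⟫₂

lemma l2Form_laplacian_right (f g : 𝓢(E, V)) : ⟪f, Δ g⟫₂ = -∑ i, ⟪∂_{b i} f, ∂_{b i} g⟫₂ := by
  simp [laplacian_eq_sum b, l2Form_lineDerivOp_left]

lemma l2Form_eulerOp_left (f g : 𝓢(E, V)) :
    ⟪eulerOp b f, g⟫₂ = -(Fintype.card ι * ⟪f, g⟫₂) - ⟪f, eulerOp b g⟫₂ := by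
  simp [eulerOp_eq, LinearMap.sum_apply, l2Form_coordMul_left, l2Form_lineDerivOp_left,
    lineDerivOp_coordMul, Finset.sum_add_distrib, sub_eq_add_neg, add_comm]

lemma l2Form_eulerOp_self (f : 𝓢(E, V)) :
    ⟪eulerOp b f, f⟫₂ = -(Fintype.card ι / 2 * ⟪f, f⟫₂) := by
  have h := l2Form_eulerOp_left b f f
  rw [l2Form_comm f (eulerOp b f)] at h
  linarith

lemma l2Form_eulerOp_laplacian (f : 𝓢(E, V)) :
    ⟪eulerOp b f, Δ f⟫₂ = (Fintype.card ι / 2 - 1) * dirichlet b f := by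
  simp only [l2Form_laplacian_right b, dirichlet, lineDerivOp_eulerOp, map_add,
    LinearMap.add_apply, l2Form_eulerOp_self, Finset.mul_sum, ← Finset.sum_neg_distrib]
  exact Finset.sum_congr rfl fun i _ => by ring

end L2Pairing

section Complex

variable {E : Type*} [NormedAddCommGroup E] [InnerProductSpace ℝ E]
  {ι : Type*} [Fintype ι] (b : OrthonormalBasis ι ℝ E)

lemma coordMul_I_smul (v : E) (f : 𝓢(E, ℂ)) :
    coordMul v (Complex.I • f) = Complex.I • coordMul v f := by
  ext x
  simp [coordMul_apply, mul_left_comm]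

lemma normSqMul_I_smul (f : 𝓢(E, ℂ)) :
    normSqMul (Complex.I • f) = Complex.I • normSqMul f := by
  ext x
  simp [normSqMul_apply, mul_left_comm]

lemma eulerOp_I_smul (f : 𝓢(E, ℂ)) : eulerOp b (Complex.I • f) = Complex.I • eulerOp b f := by
  simp [eulerOp_eq, lineDerivOp_smul, coordMul_I_smul, Finset.smul_sum]

variable [FiniteDimensional ℝ E] [MeasurableSpace E] [BorelSpace E]

local notation "⟪" f "," g "⟫₂" => l2Form f g

lemma l2Form_I_smul_right (f g : 𝓢(E, ℂ)) : ⟪f, Complex.I • g⟫₂ = -⟪Complex.I • f, g⟫₂ := by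
  simp only [l2Form_apply, ← integral_neg]
  congr! 2 with x
  simp [Complex.inner]
  ring

lemma l2Form_I_smul_I_smul (f g : 𝓢(E, ℂ)) : ⟪Complex.I • f, Complex.I • g⟫₂ = ⟪f, g⟫₂ := by
  rw [l2Form_I_smul_right, smul_smul, Complex.I_mul_I, neg_one_smul, map_neg, LinearMap.neg_apply,
    neg_neg]

lemma l2Form_I_smul_self (f : 𝓢(E, ℂ)) : ⟪Complex.I • f, f⟫₂ = 0 := by
  have h := l2Form_I_smul_right f f
  rw [l2Form_comm f] at h
  linarith

lemma l2Form_normSqMul_I_smul_self (f : 𝓢(E, ℂ)) : ⟪normSqMul (Complex.I • f), f⟫₂ = 0 := by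
  have h := l2Form_I_smul_right (normSqMul f) f
  rw [l2Form_normSqMul_left, l2Form_comm f, ← normSqMul_I_smul] at h
  linarith

lemma l2Form_normSqMul_I_smul_laplacian (f : 𝓢(E, ℂ)) :
    ⟪normSqMul f, Complex.I • Δ f⟫₂ = 2 * ⟪Complex.I • f, eulerOp b f⟫₂ := by
  rw [l2Form_I_smul_right, ← normSqMul_I_smul, l2Form_laplacian_right b, neg_neg, eulerOp_eq,
    map_sum, Finset.mul_sum]
  refine Finset.sum_congr rfl fun i _ => ?_
  rw [lineDerivOp_normSqMul, map_add, LinearMap.add_apply, lineDerivOp_smul,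
    l2Form_normSqMul_I_smul_self, add_zero, map_smul, LinearMap.smul_apply, l2Form_coordMul_left,
    smul_eq_mul]

end Complex

section MixedPartials

variable {E V : Type*} [NormedAddCommGroup E] [NormedSpace ℝ E] [NormedAddCommGroup V]
  [NormedSpace ℝ V]

lemma hasFDerivAt_slice_snd {G : ℝ × E → V} {t : ℝ} {x : E} (hG : DifferentiableAt ℝ G (t, x)) :
    HasFDerivAt (fun y => G (t, y)) (fderiv ℝ G (t, x) ∘L .inr ℝ ℝ E) x :=
  hG.hasFDerivAt.comp x (hasFDerivAt_prodMk_right t x)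

lemma hasDerivAt_slice_fst {G : ℝ × E → V} {t : ℝ} {x : E} (hG : DifferentiableAt ℝ G (t, x)) :
    HasDerivAt (fun s => G (s, x)) (fderiv ℝ G (t, x) (1, 0)) t :=
  hG.hasFDerivAt.comp_hasDerivAt t ((hasDerivAt_id t).prodMk (hasDerivAt_const t x))

lemma hasDerivAt_fderiv_slice {G : ℝ × E → V} {t : ℝ} {x : E} (hG : ContDiffAt ℝ 2 G (t, x))
    (v : E) :
    HasDerivAt (fun s => fderiv ℝ (fun y => G (s, y)) x v)
      (fderiv ℝ (fun y => deriv (fun s => G (s, y)) t) x v) t := by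
  have hdiff : ∀ᶠ p in nhds (t, x), DifferentiableAt ℝ G p :=
    (hG.eventually (by simp)).mono fun p hp => hp.differentiableAt (by simp)
  have hdiff' : DifferentiableAt ℝ (fderiv ℝ G) (t, x) :=
    (hG.fderiv_right (m := 1) (by norm_num)).differentiableAt (by simp)
  have hspace : (fun s => fderiv ℝ (fun y => G (s, y)) x v) =ᶠ[nhds t]
      fun s => fderiv ℝ G (s, x) (0, v) := by
    filter_upwards [(Continuous.prodMk_left x).tendsto' t _ rfl hdiff] with s hs
    simp [(hasFDerivAt_slice_snd hs).fderiv]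
  have htime : (fun y => deriv (fun s => G (s, y)) t) =ᶠ[nhds x]
      fun y => fderiv ℝ G (t, y) (1, 0) := by
    filter_upwards [(Continuous.prodMk_right t).tendsto' x _ rfl hdiff] with y hy
    exact (hasDerivAt_slice_fst hy).deriv
  have hmixed := (hasFDerivAt_slice_snd hdiff').clm_apply (hasFDerivAt_const ((1, 0) : ℝ × E) x)
  rw [htime.fderiv_eq, hmixed.fderiv]
  convert! ((hasDerivAt_slice_fst hdiff').clm_apply
    (hasDerivAt_const t ((0, v) : ℝ × E))).congr_of_eventuallyEq hspace using 1
  simpa using (hG.isSymmSndFDerivAt (by simp)).eq (0, v) (1, 0)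

end MixedPartials

section LocallyBounded

open Bornology

/-- A curve on `[0, ∞)` in a topological vector space that is bounded on each `[0, T]`. -/
def IsLocallyBounded {X : Type*} [AddCommGroup X] [Module ℝ X] [TopologicalSpace X]
    (F : ℝ → X) : Prop :=
  ∀ T, IsVonNBounded ℝ (F '' Set.Icc 0 T)

section TVS

variable {X Y : Type*} [AddCommGroup X] [Module ℝ X] [TopologicalSpace X] [AddCommGroup Y]
  [Module ℝ Y] [TopologicalSpace Y] {F G : ℝ → X}

lemma IsLocallyBounded.clm_comp (hF : IsLocallyBounded F) (L : X →L[ℝ] Y) :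
    IsLocallyBounded fun t => L (F t) := fun T => by
  simpa only [Set.image_image] using (hF T).image L

lemma IsLocallyBounded.add [IsTopologicalAddGroup X]
    (hF : IsLocallyBounded F) (hG : IsLocallyBounded G) : IsLocallyBounded fun t => F t + G t :=
  fun T => ((hF T).add (hG T)).subset <| Set.image_subset_iff.mpr fun _ ht =>
    Set.add_mem_add (Set.mem_image_of_mem F ht) (Set.mem_image_of_mem G ht)

end TVS

variable {E V W Z : Type*} [NormedAddCommGroup E] [NormedSpace ℝ E]
  [NormedAddCommGroup V] [NormedSpace ℝ V] [NormedAddCommGroup W] [NormedSpace ℝ W]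
  [NormedAddCommGroup Z] [NormedSpace ℝ Z]

lemma IsLocallyBounded.const_smul {F : ℝ → 𝓢(E, ℂ)} (hF : IsLocallyBounded F) (c : ℂ) :
    IsLocallyBounded fun t => c • F t :=
  hF.clm_comp (c • ContinuousLinearMap.id ℝ 𝓢(E, ℂ))

lemma isLocallyBounded_iff_seminorm {F : ℝ → 𝓢(E, V)} :
    IsLocallyBounded F ↔
      ∀ T k n, ∃ C, ∀ t ∈ Set.Icc 0 T, SchwartzMap.seminorm ℝ k n (F t) ≤ C := by
  simp only [IsLocallyBounded, (schwartz_withSeminorms ℝ E V).isVonNBounded_iff_seminorm_bddAbove,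
    Prod.forall, schwartzSeminormFamily_apply, bddAbove_def, Set.forall_mem_image]

lemma seminorm_pairing_le (B : V →L[ℝ] W →L[ℝ] Z) (f : 𝓢(E, V)) (g : 𝓢(E, W)) (k n : ℕ) :
    SchwartzMap.seminorm ℝ k n (pairing B f g) ≤ ‖B‖ * ∑ i ∈ Finset.range (n + 1),
      n.choose i * SchwartzMap.seminorm ℝ k i f * SchwartzMap.seminorm ℝ 0 (n - i) g := by
  refine seminorm_le_bound ℝ k n _ (by positivity) fun x => ?_
  calc ‖x‖ ^ k * ‖iteratedFDeriv ℝ n (pairing B f g) x‖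
      ≤ ‖x‖ ^ k * (‖B‖ * ∑ i ∈ Finset.range (n + 1),
          n.choose i * ‖iteratedFDeriv ℝ i f x‖ * ‖iteratedFDeriv ℝ (n - i) g x‖) := by
        gcongr
        exact B.norm_iteratedFDeriv_le_of_bilinear (f.smooth ⊤) (g.smooth ⊤) x (mod_cast le_top)
    _ = ‖B‖ * ∑ i ∈ Finset.range (n + 1),
          n.choose i * (‖x‖ ^ k * ‖iteratedFDeriv ℝ i f x‖) * ‖iteratedFDeriv ℝ (n - i) g x‖ := by
        rw [mul_left_comm, Finset.mul_sum]
        congr! 2 with i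
        ring
    _ ≤ _ := by
        gcongr with i
        · exact le_seminorm ℝ k i f x
        · exact norm_iteratedFDeriv_le_seminorm ℝ g (n - i) x

lemma IsLocallyBounded.pairing {F : ℝ → 𝓢(E, V)} {G : ℝ → 𝓢(E, W)} (hF : IsLocallyBounded F)
    (hG : IsLocallyBounded G) (B : V →L[ℝ] W →L[ℝ] Z) :
    IsLocallyBounded fun t => SchwartzMap.pairing B (F t) (G t) := by
  rw [isLocallyBounded_iff_seminorm] at *
  intro T k n
  choose C hC using hF T
  choose D hD using hG T
  refine ⟨‖B‖ * ∑ i ∈ Finset.range (n + 1), n.choose i * C k i * D 0 (n - i), fun t ht => ?_⟩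
  refine (seminorm_pairing_le B (F t) (G t) k n).trans ?_
  have hC_nonneg i : 0 ≤ C k i := (apply_nonneg _ _).trans (hC k i t ht)
  gcongr with i
  · have := hC_nonneg i; positivity
  · exact hC k i t ht
  · exact hD 0 (n - i) t ht

lemma IsLocallyBounded.exists_integrable_bound [FiniteDimensional ℝ E] [MeasurableSpace E]
    [BorelSpace E] (μ : Measure E) [μ.IsAddHaarMeasure] {F : ℝ → 𝓢(E, V)}
    (hF : IsLocallyBounded F) (T : ℝ) :
    ∃ g : E → ℝ, Integrable g μ ∧ ∀ t ∈ Set.Icc 0 T, ∀ x, ‖F t x‖ ≤ g x := by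
  set d := Module.finrank ℝ E + 1
  obtain ⟨C, -, hC⟩ := (schwartz_withSeminorms ℝ E V).isVonNBounded_iff_finset_seminorm_bounded.mp
    (hF T) (Finset.Iic (d, 0))
  refine ⟨fun x => 2 ^ d * C * (1 + ‖x‖) ^ (-(d : ℝ)),
    (integrable_one_add_norm (by simp [d])).const_mul _, fun t ht x => ?_⟩
  have h := one_add_le_sup_seminorm_apply (𝕜 := ℝ) (m := (d, 0)) le_rfl le_rfl (F t) x
  rw [norm_iteratedFDeriv_zero] at h
  beta_reduce
  rw [rpow_neg (by positivity), rpow_natCast, ← div_eq_mul_inv, le_div_iff₀' (by positivity)]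
  refine h.trans ?_
  gcongr
  exact (hC _ (Set.mem_image_of_mem F ht)).le

end LocallyBounded

section SchwartzPath

variable {E V W Z : Type*} [NormedAddCommGroup E] [NormedSpace ℝ E]
  [NormedAddCommGroup V] [NormedSpace ℝ V] [NormedAddCommGroup W] [NormedSpace ℝ W]
  [NormedAddCommGroup Z] [NormedSpace ℝ Z]

/-- A curve `F : [0, ∞) → 𝓢(E, V)`, smooth in `(t, x)` jointly, with pointwise velocity `F'` for
`t > 0`, such that `F` and `F'` are locally bounded in `𝓢(E, V)`. Values at `t < 0` are junk. -/
structure IsSchwartzPath (F F' : ℝ → 𝓢(E, V)) : Prop where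
  bounded : IsLocallyBounded F
  bounded_deriv : IsLocallyBounded F'
  smooth : ContDiffOn ℝ ∞ (fun p : ℝ × E => F p.1 p.2) (Set.Ici 0 ×ˢ Set.univ)
  hasDerivAt : ∀ t, 0 < t → ∀ x, HasDerivAt (fun s => F s x) (F' t x) t

namespace IsSchwartzPath

variable {F F' : ℝ → 𝓢(E, V)} {G G' : ℝ → 𝓢(E, W)}

lemma lineDerivOp (hF : IsSchwartzPath F F') (v : E) :
    IsSchwartzPath (fun t => ∂_{v} (F t)) (fun t => ∂_{v} (F' t)) where
  bounded := hF.bounded.clm_comp (lineDerivOpCLM ℝ 𝓢(E, V) v)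
  bounded_deriv := hF.bounded_deriv.clm_comp (lineDerivOpCLM ℝ 𝓢(E, V) v)
  smooth p hp := by
    have h : ContDiffWithinAt ℝ ∞ (Function.uncurry fun (q : ℝ × E) y => F q.1 y)
        ((Set.Ici 0 ×ˢ Set.univ) ×ˢ Set.univ) (p, p.2) :=
      (hF.smooth p hp).comp (p, p.2) (f := fun q : (ℝ × E) × E => (q.1.1, q.2))
        (by fun_prop) (fun q hq => ⟨hq.1.1, trivial⟩)
    simpa [lineDerivOp_apply_eq_fderiv] using
      h.fderivWithin_apply (m := ∞) (k := fun _ => v) contDiffWithinAt_snd contDiffWithinAt_const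
        uniqueDiffOn_univ le_rfl hp (Set.subset_univ _)
  hasDerivAt t ht x := by
    have h := hasDerivAt_fderiv_slice (((hF.smooth.contDiffAt
      (prod_mem_nhds (Ici_mem_nhds ht) univ_mem)).of_le
      (by simpa using ENat.LEInfty.out)) : ContDiffAt ℝ 2 _ (t, x)) v
    rwa [show (fun y => deriv (fun s => F s y) t) = F' t from
      funext fun y => (hF.hasDerivAt t ht y).deriv] at h

lemma pairing (hF : IsSchwartzPath F F') (hG : IsSchwartzPath G G') (B : V →L[ℝ] W →L[ℝ] Z) :
    IsSchwartzPath (fun t => SchwartzMap.pairing B (F t) (G t))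
      (fun t => SchwartzMap.pairing B (F' t) (G t) + SchwartzMap.pairing B (F t) (G' t)) where
  bounded := hF.bounded.pairing hG.bounded B
  bounded_deriv := (hF.bounded_deriv.pairing hG.bounded B).add
    (hF.bounded.pairing hG.bounded_deriv B)
  smooth := B.isBoundedBilinearMap.contDiff.comp_contDiffOn (hF.smooth.prodMk hG.smooth)
  hasDerivAt t ht x :=
    (B.hasFDerivAt.comp_hasDerivAt t (hF.hasDerivAt t ht x)).clm_apply (hG.hasDerivAt t ht x)

lemma smulLeft (hF : IsSchwartzPath F F') {m : E → ℝ} (hm : HasTemperateGrowth m) :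
    IsSchwartzPath (fun t => smulLeftCLM V m (F t)) (fun t => smulLeftCLM V m (F' t)) where
  bounded := hF.bounded.clm_comp (smulLeftCLM V m)
  bounded_deriv := hF.bounded_deriv.clm_comp (smulLeftCLM V m)
  smooth := by
    simp only [smulLeftCLM_apply_apply hm]
    exact (hm.1.comp contDiff_snd).contDiffOn.smul hF.smooth
  hasDerivAt t ht x := by
    simpa only [smulLeftCLM_apply_apply hm] using (hF.hasDerivAt t ht x).fun_const_smul (m x)

lemma const_smul {F F' : ℝ → 𝓢(E, ℂ)} (hF : IsSchwartzPath F F') (c : ℂ) :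
    IsSchwartzPath (fun t => c • F t) (fun t => c • F' t) := by
  refine ⟨hF.bounded.const_smul c, hF.bounded_deriv.const_smul c, ?_, fun t ht x => ?_⟩
  · exact contDiffOn_const.mul hF.smooth
  · exact (hF.hasDerivAt t ht x).const_mul c

lemma add {G G' : ℝ → 𝓢(E, V)} (hF : IsSchwartzPath F F') (hG : IsSchwartzPath G G') :
    IsSchwartzPath (fun t => F t + G t) (fun t => F' t + G' t) where
  bounded := hF.bounded.add hG.bounded
  bounded_deriv := hF.bounded_deriv.add hG.bounded_deriv
  smooth := hF.smooth.add hG.smooth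
  hasDerivAt t ht x := (hF.hasDerivAt t ht x).add (hG.hasDerivAt t ht x)

lemma sum {ι : Type*} (s : Finset ι) {F F' : ι → ℝ → 𝓢(E, V)}
    (hF : ∀ i ∈ s, IsSchwartzPath (F i) (F' i)) :
    IsSchwartzPath (fun t => ∑ i ∈ s, F i t) (fun t => ∑ i ∈ s, F' i t) := by
  classical
  induction s using Finset.induction_on with
  | empty =>
    have hzero : IsLocallyBounded fun _ : ℝ => (0 : 𝓢(E, V)) := fun T =>
      (Bornology.isVonNBounded_singleton (0 : 𝓢(E, V))).subset
        (Set.image_subset_iff.mpr fun _ _ => Set.mem_singleton 0)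
    exact ⟨hzero, hzero, contDiffOn_const, fun t _ _ => hasDerivAt_const t 0⟩
  | insert i s hi ih =>
    simp only [Finset.sum_insert hi]
    exact (hF i (s.mem_insert_self i)).add (ih fun j hj => hF j (Finset.mem_insert_of_mem hj))

section Integral

variable [FiniteDimensional ℝ E] [MeasurableSpace E] [BorelSpace E] (μ : Measure E)
  [μ.IsAddHaarMeasure]

lemma continuousOn_integral (hF : IsSchwartzPath F F') :
    ContinuousOn (fun t => ∫ x, F t x ∂μ) (Set.Ici 0) := fun t ht => by
  obtain ⟨g, hg, hFg⟩ := hF.bounded.exists_integrable_bound μ (t + 1)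
  refine continuousWithinAt_of_dominated (bound := g)
    (.of_forall fun s => (F s).integrable.aestronglyMeasurable) ?_ hg (.of_forall fun x => ?_)
  · filter_upwards [self_mem_nhdsWithin, mem_nhdsWithin_of_mem_nhds (Iic_mem_nhds (lt_add_one t))]
      with s hs hst
    exact .of_forall (hFg s ⟨hs, hst⟩)
  · exact (hF.smooth.continuousOn.comp (f := fun s : ℝ => (s, x)) (by fun_prop)
      fun s hs => ⟨hs, trivial⟩) t ht

lemma hasDerivAt_integral (hF : IsSchwartzPath F F') {t : ℝ} (ht : 0 < t) :
    HasDerivAt (fun t => ∫ x, F t x ∂μ) (∫ x, F' t x ∂μ) t := by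
  obtain ⟨g, hg, hFg⟩ := hF.bounded_deriv.exists_integrable_bound μ (t + 1)
  exact (hasDerivAt_integral_of_dominated_loc_of_deriv_le (bound := g)
    (Ioo_mem_nhds ht (lt_add_one t)) (.of_forall fun s => (F s).integrable.aestronglyMeasurable)
    (F t).integrable (F' t).integrable.aestronglyMeasurable
    (.of_forall fun x s hs => hFg s (Set.Ioo_subset_Icc_self hs) x) hg
    (.of_forall fun x s hs => hF.hasDerivAt s hs.1 x)).2

end Integral

end IsSchwartzPath

end SchwartzPath

section RealFunctions

variable {f f' f'' : ℝ → ℝ} {a c : ℝ}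

lemma eq_of_hasDerivAt_zero (hf : ContinuousOn f (Set.Ici a))
    (hf' : ∀ t, a < t → HasDerivAt f 0 t) {t : ℝ} (ht : a ≤ t) : f t = f a := by
  obtain rfl | hat := ht.eq_or_lt
  · rfl
  obtain ⟨s, -, hs⟩ := exists_hasDerivAt_eq_slope f (fun _ => 0) hat
    (hf.mono Set.Icc_subset_Ici_self) fun s hs => hf' s hs.1
  rw [eq_comm, div_eq_zero_iff, or_iff_left (sub_pos.mpr hat).ne'] at hs
  exact sub_eq_zero.mp hs

lemma lt_of_continuousOn_of_ne (hf : ContinuousOn f (Set.Ici a)) (hne : ∀ t, a ≤ t → f t ≠ c)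
    (ha : c < f a) {t : ℝ} (ht : a ≤ t) : c < f t := by
  by_contra! hle
  obtain ⟨s, hs, hsc⟩ :=
    isPreconnected_Ici.intermediate_value ht Set.self_mem_Ici hf ⟨hle, ha.le⟩
  exact hne s hs hsc

lemma tendsto_atBot_of_hasDerivAt_le (hf : ∀ t, a < t → HasDerivAt f (f' t) t) (hc : 0 < c)
    (hf' : ∀ t, a < t → f' t ≤ -c) : Tendsto f atTop atBot := by
  have hslope : ∀ t, a + 1 ≤ t → f t ≤ f (a + 1) + -c * (t - (a + 1)) := fun t ht => by
    have hdiff : DifferentiableOn ℝ f (Set.Ioi a) := fun s hs =>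
      (hf s hs).differentiableAt.differentiableWithinAt
    have h := (convex_Ioi a).image_sub_le_mul_sub_of_deriv_le hdiff.continuousOn
      (hdiff.mono interior_subset) (fun s hs => by
        rw [interior_Ioi] at hs
        exact (hf s hs).deriv.trans_le (hf' s hs))
      (a + 1) (lt_add_one a) t ((lt_add_one a).trans_le ht) ht
    linarith
  have hline : Tendsto (fun t => f (a + 1) + -c * (t - (a + 1))) atTop atBot :=
    tendsto_atBot_add_const_left _ _
      ((tendsto_atTop_add_const_right _ _ tendsto_id).const_mul_atTop_of_neg (neg_neg_of_pos hc))
  exact tendsto_atBot_mono' _ ((eventually_ge_atTop _).mono hslope) hline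

lemma exists_neg_of_second_deriv_le (hf : ∀ t, a < t → HasDerivAt f (f' t) t)
    (hf' : ∀ t, a < t → HasDerivAt f' (f'' t) t) (hc : 0 < c)
    (hf'' : ∀ t, a < t → f'' t ≤ -c) : ∃ t, a < t ∧ f t < 0 := by
  obtain ⟨s, hs⟩ := eventually_atTop.mp
    ((tendsto_atBot_of_hasDerivAt_le hf' hc hf'').eventually_le_atBot (-1))
  have hlim : Tendsto f atTop atBot :=
    tendsto_atBot_of_hasDerivAt_le (a := max a s)
      (fun t ht => hf t ((le_max_left a s).trans_lt ht)) one_pos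
      fun t ht => hs t ((le_max_right a s).trans ht.le)
  exact ((eventually_gt_atTop a).and (hlim.eventually_lt_atBot 0)).exists

end RealFunctions

section PathForms

variable {ι E V : Type*} [Fintype ι] [NormedAddCommGroup E] [InnerProductSpace ℝ E]
  [NormedAddCommGroup V] (b : OrthonormalBasis ι ℝ E)

namespace IsSchwartzPath

lemma eulerOp [NormedSpace ℝ V] {F F' : ℝ → 𝓢(E, V)} (hF : IsSchwartzPath F F') :
    IsSchwartzPath (fun t => _root_.eulerOp b (F t)) (fun t => _root_.eulerOp b (F' t)) := by
  simp only [eulerOp_eq]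
  exact sum _ fun i _ => (hF.lineDerivOp (b i)).smulLeft (hasTemperateGrowth_inner_right (b i))

variable [FiniteDimensional ℝ E] [MeasurableSpace E] [BorelSpace E] [InnerProductSpace ℝ V]
  {F F' G G' : ℝ → 𝓢(E, V)}

lemma continuousOn_l2Form (hF : IsSchwartzPath F F') (hG : IsSchwartzPath G G') :
    ContinuousOn (fun t => l2Form (F t) (G t)) (Set.Ici 0) :=
  (hF.pairing hG (innerSL ℝ)).continuousOn_integral volume

lemma hasDerivAt_l2Form (hF : IsSchwartzPath F F') (hG : IsSchwartzPath G G') {t : ℝ}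
    (ht : 0 < t) :
    HasDerivAt (fun t => l2Form (F t) (G t)) (l2Form (F' t) (G t) + l2Form (F t) (G' t)) t := by
  convert! (hF.pairing hG (innerSL ℝ)).hasDerivAt_integral volume ht using 1
  exact (integral_add (integrable_inner _ _) (integrable_inner _ _)).symm

lemma continuousOn_dirichlet (hF : IsSchwartzPath F F') :
    ContinuousOn (fun t => dirichlet b (F t)) (Set.Ici 0) :=
  continuousOn_finsetSum _ fun i _ =>
    (hF.lineDerivOp (b i)).continuousOn_l2Form (hF.lineDerivOp (b i))

lemma hasDerivAt_dirichlet (hF : IsSchwartzPath F F') {t : ℝ} (ht : 0 < t) :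
    HasDerivAt (fun t => dirichlet b (F t)) (-2 * l2Form (Δ (F t)) (F' t)) t := by
  convert! HasDerivAt.fun_sum fun i (_ : i ∈ Finset.univ) =>
    (hF.lineDerivOp (b i)).hasDerivAt_l2Form (hF.lineDerivOp (b i)) ht using 1
  simp only [l2Form_comm (∂_{b _} (F t)), ← two_mul, ← Finset.mul_sum]
  rw [l2Form_comm, l2Form_laplacian_right b]
  ring

lemma hasDerivAt_l2Form_normSqMul (hF : IsSchwartzPath F F') {t : ℝ} (ht : 0 < t) :
    HasDerivAt (fun t => l2Form (normSqMul (F t)) (F t))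
      (2 * l2Form (normSqMul (F t)) (F' t)) t := by
  convert! (hF.smulLeft (hasTemperateGrowth_norm_sq E)).hasDerivAt_l2Form hF ht using 1
  change _ = l2Form (normSqMul (F' t)) (F t) + l2Form (normSqMul (F t)) (F' t)
  rw [l2Form_normSqMul_left (F' t), l2Form_comm (F' t)]
  ring

end IsSchwartzPath

end PathForms

section ComplexPath

variable {ι E : Type*} [Fintype ι] [NormedAddCommGroup E] [InnerProductSpace ℝ E]
  [FiniteDimensional ℝ E] [MeasurableSpace E] [BorelSpace E] (b : OrthonormalBasis ι ℝ E)

/-- The momentum of `f` against the dilation field, `Im ∫ conj(f) (x · ∇f)`; it is a quarter of the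
time derivative of `∫ |x|² |f|²` under the free Schrödinger flow `∂ₜf = i Δf`. -/
def dilationMomentum (f : 𝓢(E, ℂ)) : ℝ := l2Form (Complex.I • f) (eulerOp b f)

lemma hasDerivAt_dilationMomentum {F P : ℝ → 𝓢(E, ℂ)}
    (hF : IsSchwartzPath F fun t => Complex.I • P t) {t : ℝ} (ht : 0 < t) :
    HasDerivAt (fun t => dilationMomentum b (F t))
      (-2 * l2Form (eulerOp b (F t)) (P t) - Fintype.card ι * l2Form (F t) (P t)) t := by
  convert! (hF.const_smul Complex.I).hasDerivAt_l2Form (hF.eulerOp b) ht using 1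
  rw [smul_smul, Complex.I_mul_I, neg_one_smul, map_neg, LinearMap.neg_apply, eulerOp_I_smul,
    l2Form_I_smul_I_smul, l2Form_comm (F t) (eulerOp b (P t)),
    l2Form_eulerOp_left b (P t), l2Form_comm (P t), l2Form_comm (P t)]
  ring

lemma virial_laplacian (f : 𝓢(E, ℂ)) :
    -2 * l2Form (eulerOp b f) (Δ f) - Fintype.card ι * l2Form f (Δ f) = 2 * dirichlet b f := by
  rw [l2Form_eulerOp_laplacian, l2Form_laplacian_right b, dirichlet]
  ring

end ComplexPath

section QuadraticNLS

variable {ι E : Type*} [Fintype ι] [NormedAddCommGroup E] [InnerProductSpace ℝ E]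

/-- The nonlinearity `v ū` of the first equation. -/
def mulConj (v u : 𝓢(E, ℂ)) : 𝓢(E, ℂ) :=
  pairing ((ContinuousLinearMap.mul ℝ ℂ).bilinearComp (.id ℝ ℂ)
    (Complex.conjCLE : ℂ →L[ℝ] ℂ)) v u

/-- The pointwise product of complex Schwartz functions, `u²` being the nonlinearity of the second
equation. -/
def schwartzMul (u w : 𝓢(E, ℂ)) : 𝓢(E, ℂ) := pairing (ContinuousLinearMap.mul ℝ ℂ) u w

@[simp]
lemma mulConj_apply (v u : 𝓢(E, ℂ)) (x : E) : mulConj v u x = v x * (starRingEnd ℂ) (u x) := rfl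

@[simp]
lemma schwartzMul_apply (u w : 𝓢(E, ℂ)) (x : E) : schwartzMul u w x = u x * w x := rfl

lemma schwartzMul_comm (u w : 𝓢(E, ℂ)) : schwartzMul u w = schwartzMul w u := by
  ext x
  exact mul_comm _ _

variable [FiniteDimensional ℝ E]

/-- The Schrödinger force `Δu + v ū` driving the first component. -/
def forceU (u v : 𝓢(E, ℂ)) : 𝓢(E, ℂ) := Δ u + mulConj v u

/-- The Schrödinger force `κ Δv + u²` driving the second component. -/
def forceV (κ : ℝ) (u v : 𝓢(E, ℂ)) : 𝓢(E, ℂ) := κ • Δ v + schwartzMul u u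

lemma isLocallyBounded_forceU {U V : ℝ → 𝓢(E, ℂ)} (hU : IsLocallyBounded U)
    (hV : IsLocallyBounded V) : IsLocallyBounded fun t => forceU (U t) (V t) :=
  (hU.clm_comp (laplacianCLM ℝ E 𝓢(E, ℂ))).add (hV.pairing hU _)

lemma isLocallyBounded_forceV (κ : ℝ) {U V : ℝ → 𝓢(E, ℂ)} (hU : IsLocallyBounded U)
    (hV : IsLocallyBounded V) : IsLocallyBounded fun t => forceV κ (U t) (V t) :=
  (hV.clm_comp (κ • laplacianCLM ℝ E 𝓢(E, ℂ))).add (hU.pairing hU _)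

/-- A solution of the quadratic NLS system on `[0, ∞)`, as a curve of Schwartz functions. -/
structure IsNLSPath (κ : ℝ) (U V : ℝ → 𝓢(E, ℂ)) : Prop where
  path_u : IsSchwartzPath U fun t => Complex.I • forceU (U t) (V t)
  path_v : IsSchwartzPath V fun t => Complex.I • forceV κ (U t) (V t)

variable [MeasurableSpace E] [BorelSpace E] (b : OrthonormalBasis ι ℝ E)

lemma l2Form_schwartzMul_right (v u w : 𝓢(E, ℂ)) :
    l2Form v (schwartzMul u w) = l2Form (mulConj v u) w := by
  simp only [l2Form_apply]
  congr! 2 with x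
  simp [Complex.inner]
  ring

/-- The potential energy `Re ∫ conj(v) u²` of a pair of Schwartz functions. -/
def potential (u v : 𝓢(E, ℂ)) : ℝ := l2Form v (schwartzMul u u)

/-- The kinetic energy `∫ |∇u|² + (κ/2) ∫ |∇v|²` of a pair of Schwartz functions. -/
def kinetic (κ : ℝ) (u v : 𝓢(E, ℂ)) : ℝ := dirichlet b u + κ / 2 * dirichlet b v

/-- The variance `∫ |x|² (|u|² + |v|²)`. -/
def variance (u v : 𝓢(E, ℂ)) : ℝ := l2Form (normSqMul u) u + l2Form (normSqMul v) v

lemma l2Form_mulConj_self (u v : 𝓢(E, ℂ)) : l2Form u (mulConj v u) = potential u v := by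
  rw [potential, l2Form_schwartzMul_right, l2Form_comm]

lemma l2Form_eulerOp_nonlinearity (u v : 𝓢(E, ℂ)) :
    2 * l2Form (eulerOp b u) (mulConj v u) + l2Form (eulerOp b v) (schwartzMul u u) =
      -(Fintype.card ι * potential u v) := by
  have hleibniz : eulerOp b (schwartzMul u u) = 2 • schwartzMul u (eulerOp b u) := by
    rw [two_nsmul, schwartzMul, eulerOp_pairing]
    exact congrArg₂ _ (schwartzMul_comm _ _) rfl
  rw [l2Form_eulerOp_left b v, hleibniz, map_nsmul, l2Form_schwartzMul_right v u (eulerOp b u),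
    l2Form_comm (mulConj v u), nsmul_eq_mul, potential]
  push_cast
  ring

lemma variance_nonneg (u v : 𝓢(E, ℂ)) : 0 ≤ variance u v :=
  add_nonneg (l2Form_normSqMul_self_nonneg u) (l2Form_normSqMul_self_nonneg v)

lemma l2Form_normSqMul_nonlinearity (u v : 𝓢(E, ℂ)) :
    l2Form (normSqMul u) (Complex.I • mulConj v u) =
      -l2Form (normSqMul v) (Complex.I • schwartzMul u u) := by
  simp only [l2Form_apply, ← integral_neg]
  congr! 2 with x
  simp [Complex.inner, normSqMul_apply, -Complex.ofReal_pow]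
  ring

namespace IsNLSPath

variable {κ : ℝ} {U V : ℝ → 𝓢(E, ℂ)}

lemma hasDerivAt_potential (h : IsNLSPath κ U V) {t : ℝ} (ht : 0 < t) :
    HasDerivAt (fun t => potential (U t) (V t))
      (2 * l2Form (mulConj (V t) (U t)) (Complex.I • forceU (U t) (V t)) +
        l2Form (schwartzMul (U t) (U t)) (Complex.I • forceV κ (U t) (V t))) t := by
  convert! h.path_v.hasDerivAt_l2Form (h.path_u.pairing h.path_u (.mul ℝ ℂ)) ht using 1
  rw [map_add]
  change _ = l2Form _ (schwartzMul _ _) + (l2Form _ (schwartzMul _ _) + l2Form _ (schwartzMul _ _))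
  rw [schwartzMul_comm (Complex.I • _) (U t), l2Form_schwartzMul_right (V t), l2Form_comm _
    (schwartzMul (U t) (U t))]
  ring

lemma hasDerivAt_energy (h : IsNLSPath κ U V) {t : ℝ} (ht : 0 < t) :
    HasDerivAt (fun t => kinetic b κ (U t) (V t) - potential (U t) (V t)) 0 t := by
  convert! ((h.path_u.hasDerivAt_dirichlet b ht).add
    ((h.path_v.hasDerivAt_dirichlet b ht).const_mul (κ / 2))).sub
      (h.hasDerivAt_potential ht) using 1
  have hu : l2Form (forceU (U t) (V t)) (Complex.I • forceU (U t) (V t)) = 0 := by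
    rw [l2Form_comm, l2Form_I_smul_self]
  have hv : l2Form (forceV κ (U t) (V t)) (Complex.I • forceV κ (U t) (V t)) = 0 := by
    rw [l2Form_comm, l2Form_I_smul_self]
  nth_rw 1 [forceU, map_add, LinearMap.add_apply] at hu
  nth_rw 1 [forceV, map_add, map_smul l2Form κ, LinearMap.add_apply, LinearMap.smul_apply,
    smul_eq_mul] at hv
  linarith

lemma continuousOn_kinetic (h : IsNLSPath κ U V) :
    ContinuousOn (fun t => kinetic b κ (U t) (V t)) (Set.Ici 0) :=
  (h.path_u.continuousOn_dirichlet b).add ((h.path_v.continuousOn_dirichlet b).const_smul (κ / 2))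

lemma continuousOn_potential (h : IsNLSPath κ U V) :
    ContinuousOn (fun t => potential (U t) (V t)) (Set.Ici 0) :=
  h.path_v.continuousOn_l2Form (h.path_u.pairing h.path_u (.mul ℝ ℂ))

lemma energy_eq (h : IsNLSPath κ U V) {t : ℝ} (ht : 0 ≤ t) :
    kinetic b κ (U t) (V t) - potential (U t) (V t) =
      kinetic b κ (U 0) (V 0) - potential (U 0) (V 0) :=
  eq_of_hasDerivAt_zero ((h.continuousOn_kinetic b).sub h.continuousOn_potential)
    (fun _ => h.hasDerivAt_energy b) ht

lemma hasDerivAt_variance (h : IsNLSPath κ U V) {t : ℝ} (ht : 0 < t) :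
    HasDerivAt (fun t => variance (U t) (V t))
      (4 * (dilationMomentum b (U t) + κ * dilationMomentum b (V t))) t := by
  convert! (h.path_u.hasDerivAt_l2Form_normSqMul ht).add
    (h.path_v.hasDerivAt_l2Form_normSqMul ht) using 1
  simp only [forceU, forceV, smul_add, map_add, smul_comm Complex.I κ, map_smul, smul_eq_mul,
    l2Form_normSqMul_I_smul_laplacian b, l2Form_normSqMul_nonlinearity, dilationMomentum]
  ring

end IsNLSPath

/-- Only for `κ = 1/2` do the terms containing `x · ∇` in the nonlinear part combine into the
exact derivative `x · ∇ (v̄ u²)`. -/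
lemma IsNLSPath.hasDerivAt_dilationMomentum {U V : ℝ → 𝓢(E, ℂ)} (h : IsNLSPath (1 / 2) U V)
    {t : ℝ} (ht : 0 < t) :
    HasDerivAt (fun t => dilationMomentum b (U t) + 1 / 2 * dilationMomentum b (V t))
      (2 * kinetic b (1 / 2) (U t) (V t) - Fintype.card ι / 2 * potential (U t) (V t)) t := by
  convert! (_root_.hasDerivAt_dilationMomentum b h.path_u ht).add
    ((_root_.hasDerivAt_dilationMomentum b h.path_v ht).const_mul (1 / 2)) using 1
  simp only [forceU, forceV, map_add, map_smul, smul_eq_mul, l2Form_mulConj_self]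
  rw [show l2Form (V t) (schwartzMul (U t) (U t)) = potential (U t) (V t) from rfl, kinetic]
  linear_combination -virial_laplacian b (U t) - 1 / 4 * virial_laplacian b (V t) +
    l2Form_eulerOp_nonlinearity b (U t) (V t)

end QuadraticNLS

section ClassicalSolutions

lemma pd_eq_lineDerivOp (f : 𝓢(E6, ℂ)) (j : Fin 6) :
    pd f j = ∂_{EuclideanSpace.basisFun (Fin 6) ℝ j} f := by
  ext x
  rw [lineDerivOp_apply_eq_fderiv, EuclideanSpace.basisFun_apply, pd]

lemma lap_eq_laplacian (f : 𝓢(E6, ℂ)) : lap f = Δ f := by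
  ext x
  rw [laplacian_eq_sum (EuclideanSpace.basisFun (Fin 6) ℝ), sum_apply]
  refine Finset.sum_congr rfl fun j _ => ?_
  rw [← pd_eq_lineDerivOp, ← pd_eq_lineDerivOp, pd]

lemma integral_gradNormSq (f : 𝓢(E6, ℂ)) :
    ∫ x, gradNormSq f x = dirichlet (EuclideanSpace.basisFun (Fin 6) ℝ) f := by
  simp only [dirichlet, l2Form_apply, gradNormSq, pd_eq_lineDerivOp, ← real_inner_self_eq_norm_sq]
  exact integral_finsetSum _ fun j _ => integrable_inner _ _

lemma Hen_eq_kinetic (κ : ℝ) (f g : 𝓢(E6, ℂ)) :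
    Hen κ f g = kinetic (EuclideanSpace.basisFun (Fin 6) ℝ) κ f g := by
  rw [Hen, integral_gradNormSq, integral_gradNormSq, kinetic]

lemma Ren_eq_potential (f g : 𝓢(E6, ℂ)) : Ren f g = potential f g := by
  have hint : Integrable fun x => (starRingEnd ℂ) (g x) * f x ^ 2 := by
    convert! (mulConj (schwartzMul f f) g).integrable (μ := volume) using 2 with x
    simp only [mulConj_apply, schwartzMul_apply]
    ring
  rw [Ren, potential, l2Form_apply, ← Complex.reCLM_apply, ← Complex.reCLM.integral_comp_comm hint]
  congr! 2 with x
  simp [Complex.inner, sq, mul_comm]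

/-- The Schwartz map underlying a Schwartz function, and `0` for other functions. -/
def toSchwartz (f : E6 → ℂ) : 𝓢(E6, ℂ) :=
  open Classical in if hf : IsSchwartz f then ⟨f, hf.1, hf.2⟩ else 0

lemma coe_toSchwartz {f : E6 → ℂ} (hf : IsSchwartz f) : ⇑(toSchwartz f) = f := by
  simp only [toSchwartz, hf, dif_pos]
  rfl

lemma isSchwartz_coe (f : 𝓢(E6, ℂ)) : IsSchwartz f := ⟨f.smooth', f.decay'⟩

lemma isLocallyBounded_toSchwartz {u : ℝ → E6 → ℂ} (hu : ∀ t, 0 ≤ t → IsSchwartz (u t))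
    (hbound : ∀ T k n, ∃ C, ∀ t ∈ Set.Icc 0 T, ∀ x, ‖x‖ ^ k * ‖iteratedFDeriv ℝ n (u t) x‖ ≤ C) :
    IsLocallyBounded fun t => toSchwartz (u t) := by
  refine isLocallyBounded_iff_seminorm.mpr fun T k n => ?_
  obtain ⟨C, hC⟩ := hbound T k n
  refine ⟨max C 0, fun t ht => seminorm_le_bound ℝ k n _ (le_max_right C 0) fun x => ?_⟩
  rw [coe_toSchwartz (hu t ht.1)]
  exact (hC t ht x).trans (le_max_left C 0)

lemma isSchwartzPath_toSchwartz {u : ℝ → E6 → ℂ} {F' : ℝ → 𝓢(E6, ℂ)}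
    (hu : ∀ t, 0 ≤ t → IsSchwartz (u t))
    (hsmooth : ContDiffOn ℝ ∞ (fun p : ℝ × E6 => u p.1 p.2) (Set.Ici 0 ×ˢ Set.univ))
    (hbound : IsLocallyBounded fun t => toSchwartz (u t)) (hbound' : IsLocallyBounded F')
    (hderiv : ∀ t, 0 < t → ∀ x, deriv (fun s => u s x) t = F' t x) :
    IsSchwartzPath (fun t => toSchwartz (u t)) F' where
  bounded := hbound
  bounded_deriv := hbound'
  smooth := hsmooth.congr fun p hp => congrFun (coe_toSchwartz (hu p.1 hp.1)) p.2
  hasDerivAt t ht x := by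
    have hdiff : DifferentiableAt ℝ (fun p : ℝ × E6 => u p.1 p.2) (t, x) :=
      (hsmooth.contDiffAt (prod_mem_nhds (Ici_mem_nhds ht) univ_mem)).differentiableAt (by simp)
    have h := (hasDerivAt_slice_fst hdiff).differentiableAt.hasDerivAt
    rw [hderiv t ht x] at h
    refine h.congr_of_eventuallyEq ?_
    filter_upwards [Ici_mem_nhds ht] with s hs
    rw [coe_toSchwartz (hu s hs)]

lemma IsClassicalSol.isNLSPath {κ : ℝ} {u v : ℝ → E6 → ℂ}
    (h : IsClassicalSol κ (Set.Ici 0) u v) :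
    IsNLSPath κ (fun t => toSchwartz (u t)) (fun t => toSchwartz (v t)) := by
  have hbound T k n := h.bounds (Set.Icc 0 T) Set.Icc_subset_Ici_self isCompact_Icc k n
  have hU := isLocallyBounded_toSchwartz h.schwartz_u fun T k n =>
    (hbound T k n).imp fun _ hC t ht x => (hC t ht x).1
  have hV := isLocallyBounded_toSchwartz h.schwartz_v fun T k n =>
    (hbound T k n).imp fun _ hC t ht x => (hC t ht x).2
  constructor
  · refine isSchwartzPath_toSchwartz h.schwartz_u h.smooth.fst hU
      ((isLocallyBounded_forceU hU hV).const_smul Complex.I) fun t ht x => ?_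
    rw [smul_apply, forceU, add_apply, mulConj_apply, ← lap_eq_laplacian,
      coe_toSchwartz (h.schwartz_u t ht.le), coe_toSchwartz (h.schwartz_v t ht.le), smul_eq_mul]
    linear_combination
      -Complex.I * h.eqn_u t ht.le x + deriv (fun s => u s x) t * Complex.I_mul_I
  · refine isSchwartzPath_toSchwartz h.schwartz_v h.smooth.snd hV
      ((isLocallyBounded_forceV κ hU hV).const_smul Complex.I) fun t ht x => ?_
    rw [smul_apply, forceV, add_apply, schwartzMul_apply, smul_apply, ← lap_eq_laplacian,
      coe_toSchwartz (h.schwartz_u t ht.le), coe_toSchwartz (h.schwartz_v t ht.le), smul_eq_mul,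
      Complex.real_smul]
    linear_combination
      -Complex.I * h.eqn_v t ht.le x + deriv (fun s => v s x) t * Complex.I_mul_I

end ClassicalSolutions

section GroundState

section RadialIntegrals

variable {E : Type*} [NormedAddCommGroup E] [InnerProductSpace ℝ E]

lemma hasFDerivAt_inv_one_add_mul_norm_sq_pow {c : ℝ} (hc : 0 < c) (n : ℕ) (x : E) :
    HasFDerivAt (fun y : E => ((1 + c * ‖y‖ ^ 2) ^ n)⁻¹)
      (-(2 * c * n * ((1 + c * ‖x‖ ^ 2) ^ (n + 1))⁻¹) • innerSL ℝ x) x := by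
  have hpos : 0 < 1 + c * ‖x‖ ^ 2 := by positivity
  have hscalar : HasDerivAt (fun s : ℝ => ((1 + c * s) ^ n)⁻¹)
      (-(c * n * ((1 + c * ‖x‖ ^ 2) ^ (n + 1))⁻¹)) (‖x‖ ^ 2) := by
    convert! ((((hasDerivAt_id (‖x‖ ^ 2)).const_mul c).const_add 1).pow n).inv
      (pow_pos hpos n).ne' using 1
    cases n <;> simp
    field_simp
    ring
  refine (hscalar.comp_hasFDerivAt x (hasStrictFDerivAt_norm_sq x).hasFDerivAt).congr_fderiv ?_
  ext y
  simp
  ring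

variable [FiniteDimensional ℝ E] [MeasurableSpace E] [BorelSpace E]

lemma integral_fderiv_apply_self {g : E → ℝ} (hg : Differentiable ℝ g) (hint : Integrable g)
    (hmul : Integrable fun x => ‖x‖ * g x) (hderiv : Integrable fun x => ‖x‖ * ‖fderiv ℝ g x‖) :
    ∫ x, fderiv ℝ g x x = -(Module.finrank ℝ E * ∫ x, g x) := by
  set b := stdOrthonormalBasis ℝ E
  have hcoord i (x : E) : HasFDerivAt (fun x => ⟪b i, x⟫_ℝ) (innerSL ℝ (b i)) x :=
    (innerSL ℝ (b i)).hasFDerivAt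
  have hnorm i (x : E) : ‖⟪b i, x⟫_ℝ‖ ≤ ‖x‖ := by
    simpa using norm_inner_le_norm (𝕜 := ℝ) (b i) x
  have hmul' i : Integrable fun x => ⟪b i, x⟫_ℝ * g x :=
    hmul.mono (by fun_prop) (.of_forall fun x => by
      simp only [norm_mul, norm_norm]
      gcongr
      exact hnorm i x)
  have hderiv' i : Integrable fun x => ⟪b i, x⟫_ℝ * fderiv ℝ g x (b i) := by
    have hmeas : Measurable fun x => fderiv ℝ g x (b i) := measurable_fderiv_apply_const ℝ g (b i)
    refine hderiv.mono ((by fun_prop : Measurable fun x => ⟪b i, x⟫_ℝ).mul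
      hmeas).aestronglyMeasurable (.of_forall fun x => ?_)
    simp only [norm_mul, norm_norm]
    gcongr
    · exact hnorm i x
    · simpa using (fderiv ℝ g x).le_opNorm (b i)
  have hparts i : ∫ x, ⟪b i, x⟫_ℝ * fderiv ℝ g x (b i) = -∫ x, g x := by
    have hone x : fderiv ℝ (fun x => ⟪b i, x⟫_ℝ) x (b i) = 1 := by
      simp [(hcoord i x).fderiv]
    have h := integral_mul_fderiv_eq_neg_fderiv_mul_of_integrable (μ := volume)
      (by simpa only [hone, one_mul] using hint) (hderiv' i) (hmul' i)
      (fun x _ => (hcoord i x).differentiableAt) (fun x _ => hg x)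
    simpa only [hone, one_mul] using h
  calc ∫ x, fderiv ℝ g x x = ∫ x, ∑ i, ⟪b i, x⟫_ℝ * fderiv ℝ g x (b i) := by
        congr! 2 with x
        simpa only [map_sum, map_smul, smul_eq_mul] using
          congrArg (fderiv ℝ g x) (b.sum_repr' x).symm
    _ = ∑ i, ∫ x, ⟪b i, x⟫_ℝ * fderiv ℝ g x (b i) :=
        integral_finsetSum _ fun i _ => hderiv' i
    _ = _ := by simp [hparts]

variable {c : ℝ} {n : ℕ}

lemma integrable_inv_one_add_mul_norm_sq_pow (hc : 0 < c) (hn : Module.finrank ℝ E < 2 * n) :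
    Integrable fun x : E => ((1 + c * ‖x‖ ^ 2) ^ n)⁻¹ := by
  have h := (integrable_rpow_neg_one_add_norm_sq (E := E) (μ := volume) (r := 2 * n)
    (mod_cast hn)).comp_smul (sqrt_pos.mpr hc).ne'
  refine h.congr (.of_forall fun x => ?_)
  have hscale : ‖√c • x‖ ^ 2 = c * ‖x‖ ^ 2 := by
    rw [norm_smul, mul_pow, norm_of_nonneg (sqrt_nonneg c), sq_sqrt hc.le]
  have hexp : -(2 * (n : ℝ)) / 2 = -n := by ring
  simp only [hscale, hexp]
  rw [rpow_neg (by positivity), rpow_natCast]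

lemma integrable_norm_sq_mul_inv_one_add_mul_norm_sq_pow (hc : 0 < c)
    (hn : Module.finrank ℝ E < 2 * n) :
    Integrable fun x : E => ‖x‖ ^ 2 * ((1 + c * ‖x‖ ^ 2) ^ (n + 1))⁻¹ := by
  refine ((integrable_inv_one_add_mul_norm_sq_pow hc hn).const_mul c⁻¹).mono'
    (by fun_prop (disch := intros; positivity)) (.of_forall fun x => ?_)
  rw [norm_of_nonneg (by positivity), ← sub_nonneg]
  have : c⁻¹ * ((1 + c * ‖x‖ ^ 2) ^ n)⁻¹ - ‖x‖ ^ 2 * ((1 + c * ‖x‖ ^ 2) ^ (n + 1))⁻¹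
      = c⁻¹ * ((1 + c * ‖x‖ ^ 2) ^ (n + 1))⁻¹ := by
    field_simp
    ring
  rw [this]
  positivity

lemma integral_norm_sq_mul_inv_one_add_mul_norm_sq_pow (hc : 0 < c)
    (hn : Module.finrank ℝ E < 2 * n) :
    2 * c * (n + 1) * ∫ x : E, ‖x‖ ^ 2 * ((1 + c * ‖x‖ ^ 2) ^ (n + 2))⁻¹
      = Module.finrank ℝ E * ∫ x : E, ((1 + c * ‖x‖ ^ 2) ^ (n + 1))⁻¹ := by
  have hderiv (x : E) := hasFDerivAt_inv_one_add_mul_norm_sq_pow hc (n + 1) x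
  have hint : Integrable fun x : E => ((1 + c * ‖x‖ ^ 2) ^ (n + 1))⁻¹ :=
    integrable_inv_one_add_mul_norm_sq_pow hc (by lia)
  have hsq := integrable_norm_sq_mul_inv_one_add_mul_norm_sq_pow hc hn
  have hsq' := integrable_norm_sq_mul_inv_one_add_mul_norm_sq_pow (n := n + 1) hc
    (show Module.finrank ℝ E < _ by lia)
  have hnorm : Integrable fun x : E => ‖x‖ * ((1 + c * ‖x‖ ^ 2) ^ (n + 1))⁻¹ := by
    refine (hint.add hsq).mono' (by fun_prop (disch := intros; positivity))
      (.of_forall fun x => ?_)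
    rw [norm_of_nonneg (by positivity), Pi.add_apply, ← one_add_mul]
    gcongr
    nlinarith [sq_nonneg (‖x‖ - 1)]
  have hdivergence := integral_fderiv_apply_self (fun x => (hderiv x).differentiableAt) hint hnorm
    ((hsq'.const_mul (2 * c * (n + 1))).congr (.of_forall fun x => by
      beta_reduce
      rw [(hderiv x).fderiv, norm_smul, norm_neg, norm_of_nonneg (by positivity),
        innerSL_apply_norm]
      push_cast
      ring))
  rw [← neg_eq_iff_eq_neg.mpr hdivergence, ← integral_neg, ← integral_const_mul]
  refine integral_congr_ae (.of_forall fun x => ?_)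
  simp [(hderiv x).fderiv]
  ring

end RadialIntegrals

/-- The Aubin–Talenti profile `(1 + |x|²/24)⁻²`; both components of `W` are multiples of it. -/
def bubble (x : E6) : ℝ := ((1 + ‖x‖ ^ 2 / 24) ^ 2)⁻¹

lemma bubble_nonneg (x : E6) : 0 ≤ bubble x := by
  unfold bubble
  positivity

lemma bubble_cube (x : E6) : bubble x ^ 3 = ((1 + 24⁻¹ * ‖x‖ ^ 2) ^ 6)⁻¹ := by
  rw [bubble, inv_pow, ← pow_mul, div_eq_inv_mul]

lemma integral_norm_sq_mul_bubble_cube :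
    ∫ x, ‖x‖ ^ 2 / 36 * bubble x ^ 3 = ∫ x, bubble x ^ 3 := by
  have hmoment := integral_norm_sq_mul_inv_one_add_mul_norm_sq_pow (E := E6) (c := 24⁻¹) (n := 4)
    (by norm_num) (by simp)
  have hint : Integrable fun x : E6 => ((1 + 24⁻¹ * ‖x‖ ^ 2) ^ 6)⁻¹ :=
    integrable_inv_one_add_mul_norm_sq_pow (by norm_num) (by simp)
  have hint' : Integrable fun x : E6 => ‖x‖ ^ 2 * ((1 + 24⁻¹ * ‖x‖ ^ 2) ^ 6)⁻¹ :=
    integrable_norm_sq_mul_inv_one_add_mul_norm_sq_pow (by norm_num) (by simp)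
  have hsplit : ∫ x : E6, ((1 + 24⁻¹ * ‖x‖ ^ 2) ^ 5)⁻¹
      = (∫ x : E6, ((1 + 24⁻¹ * ‖x‖ ^ 2) ^ 6)⁻¹)
        + 24⁻¹ * ∫ x : E6, ‖x‖ ^ 2 * ((1 + 24⁻¹ * ‖x‖ ^ 2) ^ 6)⁻¹ := by
    rw [← integral_const_mul, ← integral_add hint (hint'.const_mul _)]
    congr! 2 with x
    field_simp
  simp only [finrank_euclideanSpace, Fintype.card_fin] at hmoment
  norm_num at hmoment
  simp only [bubble_cube, div_mul_eq_mul_div, integral_div]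
  linarith

lemma gradNormSq_const_mul_bubble (a : ℝ) (x : E6) :
    gradNormSq (fun y => ((a * bubble y : ℝ) : ℂ)) x
      = a ^ 2 * (‖x‖ ^ 2 / 36 * bubble x ^ 3) := by
  set s := a * -(6⁻¹ * ((1 + 24⁻¹ * ‖x‖ ^ 2) ^ 3)⁻¹) with hs
  have hbubble : bubble = fun y => ((1 + 24⁻¹ * ‖y‖ ^ 2) ^ 2)⁻¹ := by
    ext y
    rw [bubble, div_eq_inv_mul]
  have hderiv : HasFDerivAt (fun y => ((a * bubble y : ℝ) : ℂ))
      (Complex.ofRealCLM ∘L (s • innerSL ℝ x)) x := by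
    refine Complex.ofRealCLM.hasFDerivAt.comp x ?_
    rw [hbubble, hs, ← smul_smul]
    convert! (hasFDerivAt_inv_one_add_mul_norm_sq_pow (c := 24⁻¹) (by norm_num) 2 x).const_mul a
      using 4
    norm_num
  have hpd (j : Fin 6) : pd (fun y => ((a * bubble y : ℝ) : ℂ)) j x = ((s * x j : ℝ) : ℂ) := by
    rw [pd, hderiv.fderiv]
    simp [EuclideanSpace.inner_single_right]
  simp only [gradNormSq, hpd, Complex.norm_real, mul_pow, norm_mul, ← Finset.mul_sum,
    ← EuclideanSpace.norm_sq_eq]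
  rw [norm_eq_abs, sq_abs, hs, bubble_cube]
  field_simp
  ring

lemma W1_eq (κ : ℝ) : W1 κ = fun x => ((√κ * bubble x : ℝ) : ℂ) := rfl

lemma W2_eq {κ : ℝ} (hκ : 0 < κ) : W2 κ = fun x => ((1 * bubble x : ℝ) : ℂ) := by
  ext x
  rw [W2, phi0, one_mul, mul_div_cancel_left₀ _ (sqrt_pos.mpr hκ).ne', bubble]

lemma Hen_groundState {κ : ℝ} (hκ : 0 < κ) :
    Hen κ (W1 κ) (W2 κ) = 3 / 2 * κ * ∫ x, bubble x ^ 3 := by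
  rw [Hen, W1_eq, W2_eq hκ]
  simp only [gradNormSq_const_mul_bubble, integral_const_mul, integral_norm_sq_mul_bubble_cube,
    sq_sqrt hκ.le]
  ring

lemma Ren_groundState {κ : ℝ} (hκ : 0 < κ) : Ren (W1 κ) (W2 κ) = κ * ∫ x, bubble x ^ 3 := by
  have hintegrand (x : E6) :
      (starRingEnd ℂ) (W2 κ x) * W1 κ x ^ 2 = ((κ * bubble x ^ 3 : ℝ) : ℂ) := by
    rw [W1_eq, W2_eq hκ, Complex.conj_ofReal, ← Complex.ofReal_pow, ← Complex.ofReal_mul, mul_pow,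
      sq_sqrt hκ.le]
    congr 1
    ring
  simp only [Ren, hintegrand, integral_complex_ofReal, Complex.ofReal_re, integral_const_mul]

lemma Een_groundState {κ : ℝ} (hκ : 0 < κ) :
    Een κ (W1 κ) (W2 κ) = Hen κ (W1 κ) (W2 κ) / 3 := by
  rw [Een, Hen_groundState hκ, Ren_groundState hκ]
  ring

end GroundState

section SharpGagliardoNirenberg

variable {κ : ℝ}

lemma Hen_groundState_nonneg (hκ : 0 < κ) : 0 ≤ Hen κ (W1 κ) (W2 κ) := by
  rw [Hen_groundState hκ]
  have hint : 0 ≤ ∫ x, bubble x ^ 3 := integral_nonneg fun x => pow_nonneg (bubble_nonneg x) 3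
  positivity

lemma Een_groundState_le_of_Hen_eq (hκ : 0 < κ) {u v : E6 → ℂ}
    (hGN : Ren u v ≤ 2 / (3 * √(Hen κ (W1 κ) (W2 κ))) * Hen κ u v ^ (3 / 2 : ℝ))
    (heq : Hen κ u v = Hen κ (W1 κ) (W2 κ)) : Een κ (W1 κ) (W2 κ) ≤ Een κ u v := by
  have hpow {h : ℝ} (hh : 0 ≤ h) : 2 / (3 * √h) * h ^ (3 / 2 : ℝ) = 2 / 3 * h := by
    rcases hh.eq_or_lt with rfl | hpos
    · simp
    · rw [sqrt_eq_rpow, show (3 / 2 : ℝ) = 1 + 1 / 2 by norm_num, rpow_add hpos, rpow_one]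
      field_simp
  rw [heq, hpow (Hen_groundState_nonneg hκ)] at hGN
  rw [Een_groundState hκ, Een, heq]
  linarith

variable {U V : ℝ → 𝓢(E6, ℂ)}

lemma IsNLSPath.Een_eq (h : IsNLSPath κ U V) {t : ℝ} (ht : 0 ≤ t) :
    Een κ (U t) (V t) = Een κ (U 0) (V 0) := by
  simp only [Een, Hen_eq_kinetic, Ren_eq_potential]
  exact h.energy_eq _ ht

lemma IsNLSPath.Hen_groundState_lt (hκ : 0 < κ) (h : IsNLSPath κ U V)
    (hGN : ∀ u v : E6 → ℂ, IsSchwartz u → IsSchwartz v →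
      Ren u v ≤ 2 / (3 * √(Hen κ (W1 κ) (W2 κ))) * Hen κ u v ^ (3 / 2 : ℝ))
    (hE : Een κ (U 0) (V 0) < Een κ (W1 κ) (W2 κ))
    (hH : Hen κ (W1 κ) (W2 κ) < Hen κ (U 0) (V 0)) {t : ℝ} (ht : 0 ≤ t) :
    Hen κ (W1 κ) (W2 κ) < Hen κ (U t) (V t) := by
  refine lt_of_continuousOn_of_ne (f := fun t => Hen κ (U t) (V t)) ?_ (fun s hs heq => ?_) hH ht
  · simpa only [Hen_eq_kinetic] using h.continuousOn_kinetic _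
  · have hle := Een_groundState_le_of_Hen_eq hκ
      (hGN _ _ (isSchwartz_coe (U s)) (isSchwartz_coe (V s))) heq
    exact (hle.trans_eq (h.Een_eq hs)).not_gt hE

lemma IsNLSPath.hasDerivAt_virial (h : IsNLSPath (1 / 2) U V) {t : ℝ} (ht : 0 < t) :
    HasDerivAt (fun s => 4 * (dilationMomentum (EuclideanSpace.basisFun (Fin 6) ℝ) (U s)
        + 1 / 2 * dilationMomentum (EuclideanSpace.basisFun (Fin 6) ℝ) (V s)))
      (12 * Een (1 / 2) (U 0) (V 0) - 4 * Hen (1 / 2) (U t) (V t)) t := by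
  convert! (h.hasDerivAt_dilationMomentum (EuclideanSpace.basisFun (Fin 6) ℝ) ht).const_mul 4
    using 1
  rw [← h.Een_eq ht.le, Een, Ren_eq_potential, Hen_eq_kinetic, Fintype.card_fin]
  push_cast
  ring

end SharpGagliardoNirenberg

/-- blow-up above the ground state in the mass-resonance case `κ = 1/2`.
Assuming the sharp Gagliardo–Nirenberg inequality for all Schwartz pairs, there is no
classical solution of the quadratic NLS system defined on all of `[0, ∞)` whose initial
data satisfies `E(u₀,v₀) < E(W)` and `H(u₀,v₀) > H(W)`. -/
theorem blowup_above_ground_state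
    (hGN : ∀ u v : E6 → ℂ, IsSchwartz u → IsSchwartz v →
      Ren u v ≤ (2 / (3 * Real.sqrt (Hen (1 / 2) (W1 (1 / 2)) (W2 (1 / 2)))))
        * (Hen (1 / 2) u v) ^ (3 / 2 : ℝ)) :
    ¬ ∃ u v : ℝ → E6 → ℂ,
      IsClassicalSol (1 / 2) (Set.Ici (0 : ℝ)) u v ∧
      Een (1 / 2) (u 0) (v 0) < Een (1 / 2) (W1 (1 / 2)) (W2 (1 / 2)) ∧
      Hen (1 / 2) (u 0) (v 0) > Hen (1 / 2) (W1 (1 / 2)) (W2 (1 / 2)) := by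
  rintro ⟨u, v, hsol, hE, hH⟩
  have hpath := hsol.isNLSPath
  rw [← coe_toSchwartz (hsol.schwartz_u 0 Set.self_mem_Ici),
    ← coe_toSchwartz (hsol.schwartz_v 0 Set.self_mem_Ici)] at hE hH
  have htrap t (ht : 0 ≤ t) := hpath.Hen_groundState_lt one_half_pos hGN hE hH ht
  have hW := Een_groundState (κ := 1 / 2) one_half_pos
  obtain ⟨t, -, hneg⟩ := exists_neg_of_second_deriv_le
    (fun t ht => hpath.hasDerivAt_variance (EuclideanSpace.basisFun (Fin 6) ℝ) ht)
    (fun t ht => hpath.hasDerivAt_virial ht) (mul_pos (by norm_num : (0 : ℝ) < 12) (sub_pos.2 hE))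
    (fun t ht => by linarith [htrap t ht.le])
  exact (variance_nonneg _ _).not_gt hneg
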